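/- Let d ≥ 2 be an integer and let n_Z be a d×d real symmetric positive definite matrix; set n := (0, 0, n_Z) ∈ E and F_∞ := {(x, 0, 0) ∈ E : x ≤ 0} (which equals K_logdet ∩ {n}^⊥). Then for every η > 0 there exists κ > 0 such that for every q ∈ E with ⟨q, n⟩ = 0 and ‖q‖ ≤ η one has dist(q, F_∞) ≤ κ · g_log(dist(q, K_logdet)). -/

import Mathlib

/-!
Write `q = (x, y, Z)` and let `p = (x', y', Z') ∈ K_logdet` with `t = ‖q - p‖`. Since `⟨q, n⟩ = 0`,
`tr (Z' n_Z) = tr ((Z' - Z) n_Z) = O(t)`, and as `Z' ⪰ 0` and `n_Z ≻ 0` this forces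
`tr Z' ≤ C t`, hence also `‖Z‖ = O(t)` (`exists_trace_le`, `trace_sq_le_of_entries`).

If `y' = 0`, then `x' ≤ 0` and the distance from `q` to `F_∞` is `O(t)`. If `y' > 0`, then
`det (Z' / y') ≤ (tr Z' / y') ^ d` gives `x' ≤ d y' log (C t / y')`. On the one hand this bounds
`x'` above by `d C t`. On the other hand `x'` is bounded below, because `q` is bounded, so
`y' (-log t)` is bounded and `y' = O(g_log t)` (`exp_branch`). As `t ≤ g_log t`, both cases give
`dist(q, F_∞) ≤ κ g_log(t)` for small `t`, and for large `t` the bound holds because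
`dist(q, F_∞) ≤ ‖q‖ ≤ η`. The point `p` need not realise the distance to `K_logdet`: continuity of
`g_log` on `[0, ∞)` allows passing to the limit along a minimising sequence.
-/

open Matrix Filter

noncomputable section

/-- The space `E = ℝ × ℝ × S^d` (matrix parts are required to be symmetric where relevant). -/
abbrev E (d : ℕ) : Type := ℝ × ℝ × Matrix (Fin d) (Fin d) ℝ

/-- The inner product `⟨(x,y,Z),(x',y',Z')⟩ = x x' + y y' + tr (Z Z')` on `E`. -/
def ip {d : ℕ} (p q : E d) : ℝ := p.1 * q.1 + p.2.1 * q.2.1 + (p.2.2 * q.2.2).trace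

/-- The induced norm `‖(x,y,Z)‖ = sqrt (x² + y² + tr (Z²))` on `E`. -/
def nrm {d : ℕ} (p : E d) : ℝ := Real.sqrt (p.1 ^ 2 + p.2.1 ^ 2 + (p.2.2 * p.2.2).trace)

/-- Distance from a point to a set: `dist(p, S) = inf {‖p - s‖ : s ∈ S}`. -/
def sdist {d : ℕ} (p : E d) (S : Set (E d)) : ℝ := sInf {r : ℝ | ∃ s ∈ S, r = nrm (p - s)}

/-- The log-determinant cone `K_logdet`. -/
def Klogdet (d : ℕ) : Set (E d) :=
  {p | (0 < p.2.1 ∧ p.2.2.PosDef ∧ p.1 ≤ p.2.1 * Real.log ((p.2.1⁻¹ • p.2.2).det))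
    ∨ (p.1 ≤ 0 ∧ p.2.1 = 0 ∧ p.2.2.PosSemidef)}

/-- The log-type residual function `g_log`. -/
def glog (t : ℝ) : ℝ :=
  if t = 0 then 0
  else if t ≤ Real.exp (-2) then -1 / Real.log t
  else 1 / 4 + Real.exp 2 / 4 * t

open Topology

/-! ### Traces and determinants of positive semidefinite matrices -/

/-- In an eigenbasis of `A`, the trace of `A * C` is the sum of the eigenvalues of `A` weighted by
the diagonal entries of `C`, which are nonnegative when `C` is positive semidefinite. -/
lemma trace_mul_eq_weighted {d : ℕ} {A C : Matrix (Fin d) (Fin d) ℝ} (hA : A.IsHermitian)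
    (hC : C.PosSemidef) :
    ∃ m : Fin d → ℝ, (∀ i, 0 ≤ m i) ∧ ∑ i, m i = C.trace ∧
      (A * C).trace = ∑ i, hA.eigenvalues i * m i := by
  set U : Matrix (Fin d) (Fin d) ℝ := (hA.eigenvectorUnitary : Matrix (Fin d) (Fin d) ℝ) with hU
  have hUU : U * Uᴴ = 1 := by
    have := Unitary.coe_mul_star_self hA.eigenvectorUnitary
    simpa [hU, star_eq_conjTranspose] using this
  have hsp : A = U * diagonal hA.eigenvalues * Uᴴ := by
    have h := hA.spectral_theorem
    rw [Unitary.conjStarAlgAut_apply] at h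
    simpa [hU, star_eq_conjTranspose, Function.comp_def] using h
  have hM : (Uᴴ * C * U).PosSemidef := by
    simpa using hC.mul_mul_conjTranspose_same Uᴴ
  refine ⟨fun i => (Uᴴ * C * U) i i, fun i => hM.diag_nonneg, ?_, ?_⟩
  · change (Uᴴ * C * U).trace = _
    rw [trace_mul_cycle, hUU, one_mul]
  · conv_lhs => rw [hsp]
    have : (U * diagonal hA.eigenvalues * Uᴴ * C).trace
        = (diagonal hA.eigenvalues * (Uᴴ * C * U)).trace := by
      rw [Matrix.mul_assoc, Matrix.mul_assoc, trace_mul_comm]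
      simp only [Matrix.mul_assoc]
    rw [this]
    simp [trace, diagonal_mul]

lemma eigenvalues_le_trace {d : ℕ} {A : Matrix (Fin d) (Fin d) ℝ} (hA : A.PosSemidef) (i : Fin d) :
    hA.1.eigenvalues i ≤ A.trace := by
  have h := hA.1.trace_eq_sum_eigenvalues
  simp only [RCLike.ofReal_real_eq_id, id] at h
  rw [h]
  exact Finset.single_le_sum (fun j _ => hA.eigenvalues_nonneg j) (Finset.mem_univ i)

lemma trace_sq_le {d : ℕ} {A : Matrix (Fin d) (Fin d) ℝ} (hA : A.PosSemidef) :
    (A * A).trace ≤ A.trace ^ 2 := by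
  obtain ⟨m, hm, hs, ht⟩ := trace_mul_eq_weighted hA.1 hA
  rw [ht, show A.trace ^ 2 = ∑ i, A.trace * m i by rw [← Finset.mul_sum, hs, sq]]
  exact Finset.sum_le_sum fun i _ => mul_le_mul_of_nonneg_right (eigenvalues_le_trace hA i) (hm i)

lemma det_le_trace_pow {d : ℕ} {A : Matrix (Fin d) (Fin d) ℝ} (hA : A.PosSemidef) :
    A.det ≤ A.trace ^ d := by
  rw [hA.1.det_eq_prod_eigenvalues]
  calc ∏ i, (hA.1.eigenvalues i : ℝ) ≤ ∏ _i : Fin d, A.trace :=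
        Finset.prod_le_prod (fun i _ => hA.eigenvalues_nonneg i)
          (fun i _ => eigenvalues_le_trace hA i)
    _ = A.trace ^ d := by simp

lemma exists_pos_mul_trace_le {d : ℕ} {N : Matrix (Fin d) (Fin d) ℝ} (hN : N.PosDef) :
    ∃ c : ℝ, 0 < c ∧ ∀ A : Matrix (Fin d) (Fin d) ℝ, A.PosSemidef →
      c * A.trace ≤ (A * N).trace := by
  obtain ⟨c, hc, hcl⟩ : ∃ c : ℝ, 0 < c ∧ ∀ i, c ≤ hN.1.eigenvalues i := by
    rcases isEmpty_or_nonempty (Fin d) with h | h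
    · exact ⟨1, one_pos, fun i => h.elim i⟩
    · obtain ⟨i, hi⟩ := Finite.exists_min hN.1.eigenvalues
      exact ⟨_, hN.eigenvalues_pos i, hi⟩
  refine ⟨c, hc, fun A hA => ?_⟩
  obtain ⟨m, hm, hs, ht⟩ := trace_mul_eq_weighted hN.1 hA
  rw [trace_mul_comm, ht, ← hs, Finset.mul_sum]
  exact Finset.sum_le_sum fun i _ => mul_le_mul_of_nonneg_right (hcl i) (hm i)

/-! ### Norm estimates on `E` -/

lemma trace_sq_eq {d : ℕ} {S : Matrix (Fin d) (Fin d) ℝ} (hS : S.IsSymm) :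
    (S * S).trace = ∑ i, ∑ j, S i j ^ 2 := by
  simp only [trace, diag, mul_apply]
  refine Finset.sum_congr rfl fun i _ => Finset.sum_congr rfl fun j _ => ?_
  rw [hS.apply i j, sq]

lemma trace_sq_nonneg {d : ℕ} {S : Matrix (Fin d) (Fin d) ℝ} (hS : S.IsSymm) :
    0 ≤ (S * S).trace := by
  rw [trace_sq_eq hS]; positivity

lemma entry_sq_le {d : ℕ} {S : Matrix (Fin d) (Fin d) ℝ} (hS : S.IsSymm) (i j : Fin d) :
    S i j ^ 2 ≤ (S * S).trace := by
  rw [trace_sq_eq hS]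
  calc S i j ^ 2 ≤ ∑ j, S i j ^ 2 :=
        Finset.single_le_sum (f := fun j => S i j ^ 2) (fun _ _ => sq_nonneg _) (Finset.mem_univ j)
    _ ≤ _ := Finset.single_le_sum (f := fun i => ∑ j, S i j ^ 2)
        (fun _ _ => Finset.sum_nonneg fun _ _ => sq_nonneg _) (Finset.mem_univ i)

lemma trace_sq_le_of_entries {d : ℕ} {S : Matrix (Fin d) (Fin d) ℝ} (hS : S.IsSymm) {r : ℝ}
    (h : ∀ i j, |S i j| ≤ r) : (S * S).trace ≤ (d * r) ^ 2 := by
  rw [trace_sq_eq hS]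
  calc ∑ i, ∑ j, S i j ^ 2 ≤ ∑ _i : Fin d, ∑ _j : Fin d, r ^ 2 :=
        Finset.sum_le_sum fun i _ => Finset.sum_le_sum fun j _ => by
          rw [← sq_abs]; exact pow_le_pow_left₀ (abs_nonneg _) (h i j) 2
    _ = (d * r) ^ 2 := by simp; ring

lemma abs_fst_le {d : ℕ} {p : E d} (hp : p.2.2.IsSymm) : |p.1| ≤ nrm p := by
  refine Real.abs_le_sqrt ?_
  nlinarith [trace_sq_nonneg hp, sq_nonneg p.2.1]

lemma abs_snd_le {d : ℕ} {p : E d} (hp : p.2.2.IsSymm) : |p.2.1| ≤ nrm p := by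
  refine Real.abs_le_sqrt ?_
  nlinarith [trace_sq_nonneg hp, sq_nonneg p.1]

lemma abs_entry_le {d : ℕ} {p : E d} (hp : p.2.2.IsSymm) (i j : Fin d) :
    |p.2.2 i j| ≤ nrm p := by
  refine Real.abs_le_sqrt ?_
  nlinarith [entry_sq_le hp i j, sq_nonneg p.1, sq_nonneg p.2.1]

lemma sdist_le {d : ℕ} {q s : E d} {S : Set (E d)} (hs : s ∈ S) : sdist q S ≤ nrm (q - s) := by
  refine csInf_le ⟨0, ?_⟩ ⟨s, hs, rfl⟩
  rintro _ ⟨s, -, rfl⟩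
  exact Real.sqrt_nonneg _

lemma sdist_F_le {d : ℕ} (q : E d) {a b c : ℝ} (ha : 0 ≤ a) (hc : 0 ≤ c)
    (h1 : q.1 ≤ a) (h2 : |q.2.1| ≤ b) (h3 : (q.2.2 * q.2.2).trace ≤ c ^ 2) :
    sdist q {p : E d | p.1 ≤ 0 ∧ p.2.1 = 0 ∧ p.2.2 = 0} ≤ a + b + c := by
  have hb : 0 ≤ b := (abs_nonneg _).trans h2
  have hs : ((min q.1 0, 0, 0) : E d) ∈ {p : E d | p.1 ≤ 0 ∧ p.2.1 = 0 ∧ p.2.2 = 0} :=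
    ⟨min_le_right _ _, rfl, rfl⟩
  refine (sdist_le hs).trans ?_
  refine Real.sqrt_le_iff.mpr ⟨by positivity, ?_⟩
  have e1 : (q.1 - min q.1 0) ^ 2 ≤ a ^ 2 := by
    apply pow_le_pow_left₀ (by linarith [min_le_left q.1 0])
    rcases min_cases q.1 0 with h | h <;> linarith
  have e2 : q.2.1 ^ 2 ≤ b ^ 2 := by
    rw [← sq_abs]; exact pow_le_pow_left₀ (abs_nonneg _) h2 2
  simp only [Prod.fst_sub, Prod.snd_sub, sub_zero]
  nlinarith [mul_nonneg ha hb, mul_nonneg ha hc, mul_nonneg hb hc]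

/-! ### The function `glog` -/

lemma glog_eq_neg_inv {t : ℝ} (h : t ≤ Real.exp (-2)) : glog t = -1 / Real.log t := by
  unfold glog
  split_ifs with h0
  · simp [h0]
  · rfl

lemma half_le_glog {t : ℝ} (h : Real.exp (-2) < t) : 1 / 2 ≤ glog t := by
  have h0 : t ≠ 0 := ((Real.exp_pos _).trans h).ne'
  rw [glog, if_neg h0, if_neg (not_le.mpr h)]
  have : Real.exp 2 * Real.exp (-2) = 1 := by rw [← Real.exp_add]; simp
  nlinarith [Real.exp_pos 2]

lemma le_glog {t : ℝ} (h0 : 0 ≤ t) (h : t ≤ Real.exp (-2)) : t ≤ glog t := by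
  rw [glog_eq_neg_inv h]
  rcases h0.eq_or_lt with rfl | h0
  · simp
  have hl : Real.log t ≤ -2 := (Real.log_le_iff_le_exp h0).mpr h
  rw [neg_div, ← div_neg, le_div_iff₀ (by linarith)]
  have := Real.one_sub_inv_le_log_of_pos h0
  have : t * (1 - t⁻¹) ≤ t * Real.log t := mul_le_mul_of_nonneg_left this h0.le
  rw [mul_sub, mul_inv_cancel₀ h0.ne'] at this
  linarith

/-- A formula for `glog` without case distinctions; at `0` it relies on `Real.log 0 = 0` and
`-1 / 0 = 0`. -/
lemma glog_formula (t : ℝ) :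
    glog t = -1 / Real.log (min t (Real.exp (-2)))
      + Real.exp 2 / 4 * max (t - Real.exp (-2)) 0 := by
  rcases le_or_gt t (Real.exp (-2)) with h | h
  · rw [glog_eq_neg_inv h, min_eq_left h, max_eq_right (by linarith)]; simp
  · have h0 : t ≠ 0 := ((Real.exp_pos _).trans h).ne'
    rw [glog, if_neg h0, if_neg (not_le.mpr h), min_eq_right h.le, max_eq_left (by linarith)]
    have : Real.exp 2 * Real.exp (-2) = 1 := by rw [← Real.exp_add]; simp
    rw [Real.log_exp]
    linear_combination (1 / 4) * this

lemma continuousAt_neg_inv_log {s : ℝ} (h0 : 0 ≤ s) (h1 : s < 1) :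
    ContinuousAt (fun s => -1 / Real.log s) s := by
  rcases h0.eq_or_lt with rfl | h0
  · rw [continuousAt_iff_punctured_nhds]
    have := (tendsto_inv_atBot_zero.comp Real.tendsto_log_nhdsNE_zero).neg
    simpa [div_eq_mul_inv, Function.comp_def] using this
  · exact continuousAt_const.div (Real.continuousAt_log h0.ne') (Real.log_neg h0 h1).ne

lemma continuousAt_glog {t : ℝ} (h0 : 0 ≤ t) : ContinuousAt glog t := by
  rw [show glog = _ from funext glog_formula]
  have hm : min t (Real.exp (-2)) < 1 :=
    (min_le_right _ _).trans_lt (by rw [Real.exp_lt_one_iff]; norm_num)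
  have := continuousAt_neg_inv_log (le_min h0 (Real.exp_pos (-2)).le) hm
  refine ContinuousAt.add ?_ (by fun_prop)
  exact ContinuousAt.comp (f := fun t => min t (Real.exp (-2))) this (by fun_prop)

/-! ### The error bound against a point of the cone -/

/-- For `q` orthogonal to `(0, 0, nZ)` and a point `p` with positive semidefinite matrix part, the
trace of that part is at most a constant times `‖q - p‖`. -/
lemma exists_trace_le {d : ℕ} {nZ : Matrix (Fin d) (Fin d) ℝ} (hnZ : nZ.PosDef) :
    ∃ C : ℝ, 0 < C ∧ ∀ q p : E d, q.2.2.IsSymm → p.2.2.PosSemidef → ip q (0, 0, nZ) = 0 →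
      p.2.2.trace ≤ C * nrm (q - p) := by
  obtain ⟨c, hc, h⟩ := exists_pos_mul_trace_le hnZ
  set S := ∑ i, ∑ j, |nZ j i| with hSdef
  have hS : 0 ≤ S := by positivity
  refine ⟨(S + 1) / c, by positivity, fun q p hq hp hip => ?_⟩
  have hsym : (q - p).2.2.IsSymm := by
    have := hp.1
    rw [IsHermitian, conjTranspose_eq_transpose_of_trivial] at this
    exact hq.sub this
  have ht : 0 ≤ nrm (q - p) := Real.sqrt_nonneg _
  have hip' : (q.2.2 * nZ).trace = 0 := by simpa [ip] using hip
  have e : (p.2.2 * nZ).trace ≤ S * nrm (q - p) := by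
    have : (p.2.2 * nZ).trace = -((q - p).2.2 * nZ).trace := by
      simp only [Prod.snd_sub, Matrix.sub_mul, trace_sub, hip']; ring
    rw [this]
    refine (neg_le_abs _).trans ?_
    simp only [trace, diag, mul_apply, hSdef, Finset.sum_mul]
    refine (Finset.abs_sum_le_sum_abs _ _).trans (Finset.sum_le_sum fun i _ => ?_)
    refine (Finset.abs_sum_le_sum_abs _ _).trans (Finset.sum_le_sum fun j _ => ?_)
    rw [abs_mul, mul_comm]
    exact mul_le_mul_of_nonneg_left (abs_entry_le hsym i j) (abs_nonneg _)
  rw [div_mul_eq_mul_div, le_div_iff₀ hc]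
  nlinarith [h _ hp]

/-- The scalar content of the case `y' > 0`: from `x' ≤ d y' log (C t / y')` follow an upper bound
on `x'`, and an upper bound on `y'` when `x'` is bounded below and `y'` above. -/
lemma exp_branch {D C B t x y : ℝ} (hD : 1 ≤ D) (hC : 0 < C) (ht : 0 < t)
    (ht2 : t ≤ Real.exp (-2)) (hy : 0 < y) (hyB : y ≤ B) (hxB : -B ≤ x)
    (hx : x ≤ D * (y * Real.log (C * t / y))) :
    x ≤ D * C * t ∧ y ≤ (B + B * |Real.log C| + 1) * glog t := by
  have hCt : 0 < C * t := mul_pos hC ht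
  constructor
  · have h1 := Real.log_le_sub_one_of_pos (div_pos hCt hy)
    have h2 : y * Real.log (C * t / y) ≤ C * t - y := by
      calc _ ≤ y * (C * t / y - 1) := mul_le_mul_of_nonneg_left h1 hy.le
        _ = _ := by field_simp
    have h3 : D * (y * Real.log (C * t / y)) ≤ D * (C * t) :=
      mul_le_mul_of_nonneg_left (by linarith) (by linarith)
    linarith
  · have hl : Real.log t ≤ -2 := (Real.log_le_iff_le_exp ht).mpr ht2
    rw [glog_eq_neg_inv ht2, neg_div, ← div_neg, ← mul_div_assoc, mul_one,
      le_div_iff₀ (by linarith)]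
    rw [Real.log_div hCt.ne' hy.ne', Real.log_mul hC.ne' ht.ne'] at hx
    -- `-y log y ≤ 1 - y`
    have h1 := Real.one_sub_inv_le_log_of_pos hy
    have h2 : y - 1 ≤ y * Real.log y := by
      calc y - 1 = y * (1 - y⁻¹) := by field_simp
        _ ≤ _ := mul_le_mul_of_nonneg_left h1 hy.le
    have h3 : y * Real.log C ≤ B * |Real.log C| :=
      (mul_le_mul_of_nonneg_left (le_abs_self _) hy.le).trans
        (mul_le_mul_of_nonneg_right hyB (abs_nonneg _))
    have hB : 0 < B := hy.trans_le hyB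
    -- dividing the bound on `x` by `D ≥ 1`
    have h4 : -B ≤ y * (Real.log C + Real.log t - Real.log y) := by
      by_contra! hcon
      nlinarith
    nlinarith

/-- Theorem 3.5 (log-type error bound concerning `F_∞` when `n_y = 0`): for `n = (0, 0, n_Z)`
with `n_Z ≻ 0`, and any `η > 0` there is `κ > 0` with
`dist(q, F_∞) ≤ κ g_log(dist(q, K_logdet))` for all `q ∈ {n}^⊥` with `‖q‖ ≤ η`. -/
theorem stmt_17 (d : ℕ) (hd : 2 ≤ d)
    (nZ : Matrix (Fin d) (Fin d) ℝ) (hnZ : nZ.PosDef) :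
    ∀ η : ℝ, 0 < η → ∃ κ : ℝ, 0 < κ ∧ ∀ q : E d, q.2.2.IsSymm →
      ip q (0, 0, nZ) = 0 → nrm q ≤ η →
      sdist q {p : E d | p.1 ≤ 0 ∧ p.2.1 = 0 ∧ p.2.2 = 0}
        ≤ κ * glog (sdist q (Klogdet d)) := by
  intro η hη
  obtain ⟨C, hC, htr⟩ := exists_trace_le hnZ
  have hd1 : (1 : ℝ) ≤ d := by exact_mod_cast (by omega : 1 ≤ d)
  -- a bound for `|x'|` and `|y'|` when `‖q‖ ≤ η` and `‖q - p‖ ≤ 1`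
  set B : ℝ := η + 1 with hB
  set M : ℝ := B + B * |Real.log C| + 1 with hM
  have hM0 : 0 < M := by positivity
  set κ : ℝ := 2 * η + (d * C + 1) + (1 + M) + d * (C + 1) with hκ
  refine ⟨κ, by positivity, fun q hq hip hqn => ?_⟩
  set D := sdist q {p : E d | p.1 ≤ 0 ∧ p.2.1 = 0 ∧ p.2.2 = 0} with hD
  have key : ∀ p ∈ Klogdet d, D ≤ κ * glog (nrm (q - p)) := by
    intro p hp
    set t := nrm (q - p) with ht
    have ht0 : 0 ≤ t := Real.sqrt_nonneg _
    rcases lt_or_ge (Real.exp (-2)) t with hbig | ht2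
    · have h1 : D ≤ η := by
        have hs : (0 : E d) ∈ {p : E d | p.1 ≤ 0 ∧ p.2.1 = 0 ∧ p.2.2 = 0} :=
          ⟨le_refl (0 : ℝ), rfl, rfl⟩
        refine (sdist_le hs).trans ?_
        rwa [sub_zero]
      have h2 := half_le_glog hbig
      have h3 : 2 * η ≤ κ := by
        have : 0 ≤ (d * C + 1) + (1 + M) + d * (C + 1) := by positivity
        linarith
      nlinarith
    have hg := le_glog ht0 ht2
    have hps : p.2.2.PosSemidef := by
      rcases hp with h | h
      · exact h.2.1.posSemidef
      · exact h.2.2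
    have hpsym : p.2.2.IsSymm := by
      have := hps.1
      rwa [IsHermitian, conjTranspose_eq_transpose_of_trivial] at this
    have hsym : (q - p).2.2.IsSymm := hq.sub hpsym
    have htrp := htr q p hq hps hip
    have hx := abs_le.mp (abs_fst_le hsym)
    have hy := abs_le.mp (abs_snd_le hsym)
    simp only [Prod.fst_sub, Prod.snd_sub, ← ht] at hx hy
    have hZ : (q.2.2 * q.2.2).trace ≤ (d * ((C + 1) * t)) ^ 2 := by
      refine trace_sq_le_of_entries hq fun i j => ?_
      have h1 := abs_entry_le hsym i j
      have h2 : |p.2.2 i j| ≤ p.2.2.trace :=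
        abs_le_of_sq_le_sq ((entry_sq_le hpsym i j).trans (trace_sq_le hps)) hps.trace_nonneg
      have h3 : q.2.2 i j = (q - p).2.2 i j + p.2.2 i j := by simp
      rw [h3]
      refine (abs_add_le _ _).trans ?_
      linarith
    -- both kinds of points of the cone satisfy the same two scalar bounds
    obtain ⟨hx', hy'⟩ : p.1 ≤ d * C * t ∧ |p.2.1| ≤ M * glog t := by
      rcases hp with ⟨hp1, hp2, hp3⟩ | ⟨hp1, hp2, -⟩
      · have hqx := abs_le.mp ((abs_fst_le hq).trans hqn)
        have hqy := abs_le.mp ((abs_snd_le hq).trans hqn)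
        have ht1 : t ≤ 1 := ht2.trans (Real.exp_le_one_iff.mpr (by norm_num))
        have hne : Nonempty (Fin d) := ⟨⟨0, by omega⟩⟩
        have htrpos : 0 < p.2.2.trace := hp2.trace_pos
        have htpos : 0 < t := pos_of_mul_pos_right (htrpos.trans_le htrp) hC.le
        rw [abs_of_pos hp1]
        refine exp_branch (B := B) hd1 hC htpos ht2 hp1 (by linarith) (by linarith) ?_
        have hs : (p.2.1⁻¹ • p.2.2).PosDef := hp2.smul (inv_pos.mpr hp1)
        have hdet : (p.2.1⁻¹ • p.2.2).det ≤ (C * t / p.2.1) ^ d := by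
          refine (det_le_trace_pow hs.posSemidef).trans
            (pow_le_pow_left₀ hs.posSemidef.trace_nonneg ?_ d)
          rw [trace_smul, smul_eq_mul, inv_mul_eq_div]
          gcongr
        have hlog := Real.log_le_log hs.det_pos hdet
        rw [Real.log_pow] at hlog
        have := mul_le_mul_of_nonneg_left hlog hp1.le
        linarith
      · rw [hp2, abs_zero]
        exact ⟨hp1.trans (by positivity), mul_nonneg hM0.le (ht0.trans hg)⟩
    have hqx : q.1 ≤ (d * C + 1) * t := by linarith
    have hqy : |q.2.1| ≤ t + M * glog t := by
      have : q.2.1 = (q.2.1 - p.2.1) + p.2.1 := by ring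
      rw [this]
      exact (abs_add_le _ _).trans (add_le_add (abs_le.mpr hy) hy')
    have hfin := sdist_F_le q (by positivity) (by positivity) hqx hqy hZ
    have e1 : (d * C + 1) * t ≤ (d * C + 1) * glog t :=
      mul_le_mul_of_nonneg_left hg (by positivity)
    have e2 : d * ((C + 1) * t) ≤ d * ((C + 1) * glog t) := by gcongr
    have e3 : 0 ≤ 2 * η * glog t := mul_nonneg (by positivity) (ht0.trans hg)
    calc D ≤ _ := hfin
      _ ≤ κ * glog t := by rw [hκ]; linarith
  have hne : {r : ℝ | ∃ s ∈ Klogdet d, r = nrm (q - s)}.Nonempty :=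
    ⟨_, 0, Or.inr ⟨le_refl (0 : ℝ), rfl, PosSemidef.zero⟩, rfl⟩
  have hbd : BddBelow {r : ℝ | ∃ s ∈ Klogdet d, r = nrm (q - s)} := by
    refine ⟨0, ?_⟩
    rintro _ ⟨s, -, rfl⟩
    exact Real.sqrt_nonneg _
  have h0 : 0 ≤ sdist q (Klogdet d) := by
    refine le_csInf hne ?_
    rintro _ ⟨s, -, rfl⟩
    exact Real.sqrt_nonneg _
  obtain ⟨u, -, hu, hmem⟩ := exists_seq_tendsto_sInf hne hbd
  refine ge_of_tendsto' (((continuousAt_glog h0).tendsto.comp hu).const_mul κ) fun n => ?_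
  obtain ⟨s, hs, hr⟩ := hmem n
  simp only [Function.comp_apply, hr]
  exact key s hs
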